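/- arXiv:1111.2901 — 6 statements merged into one kernel-verified Lean document; each statement's English description precedes it below -/
import Mathlib

section
/- Let A be a left self-injective semiprimary ring. Then every simple left A-module embeds into A as a left module; equivalently, Hom_A(S, A) ≠ 0 for every simple left A-module S. -/
universe u v

open Cardinal

/-- A ring is *semiprimary* if its Jacobson radical `J` is nilpotent
(`J ^ n = 0`, expressed elementwise: every product of `n` elements of `J` vanishes)
and the quotient ring `A / J` is a semisimple ring. -/
def IsSemiprimary (A : Type*) [Ring A] : Prop :=
  IsSemisimpleRing (RingCon.Quotient (⊥ : TwoSidedIdeal A).jacobson.ringCon) ∧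
  ∃ n : ℕ, 0 < n ∧ ∀ f : Fin n → A,
    (∀ i, f i ∈ Ideal.jacobson (⊥ : Ideal A)) → (List.ofFn f).prod = 0

/-- A ring is *quasi-Frobenius* if it is left self-injective and left artinian. -/
def IsQuasiFrobenius (A : Type*) [Ring A] : Prop :=
  Module.Injective A A ∧ IsArtinianRing A

theorem IsSemiprimary.toRing {A : Type u} [Ring A] (h : IsSemiprimary A) : IsSemiprimaryRing A := by
  obtain ⟨h1, n, hn, h2⟩ := h
  have hJ : ∀ x : A, x ∈ (⊥ : TwoSidedIdeal A).jacobson ↔ x ∈ Ring.jacobson A := by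
    intro x
    rw [← TwoSidedIdeal.mem_asIdeal, TwoSidedIdeal.asIdeal_jacobson, ← Ideal.jacobson_bot]
    simp
  rw [Ideal.jacobson_bot] at h2
  refine ⟨?_, n, ?_⟩
  · let g : (⊥ : TwoSidedIdeal A).jacobson.ringCon.Quotient →+* A ⧸ Ring.jacobson A :=
      RingCon.lift _ (Ideal.Quotient.mk (Ring.jacobson A)) (by
        intro x y hxy
        rw [TwoSidedIdeal.rel_iff, hJ] at hxy
        exact Ideal.Quotient.eq.mpr hxy)
    refine g.isSemisimpleRing_of_surjective fun y => ?_
    obtain ⟨x, rfl⟩ := Ideal.Quotient.mk_surjective y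
    exact ⟨(x : (⊥ : TwoSidedIdeal A).jacobson.ringCon.Quotient), rfl⟩
  · -- if every product of `d` further elements of `J` kills `x`-multiples, conclude by induction
    have key : ∀ m : ℕ, ∀ x ∈ (Ring.jacobson A) ^ m, ∀ l : List A,
        (∀ y ∈ l, y ∈ Ring.jacobson A) → l.length + m = n → l.prod * x = 0 := by
      intro m
      induction m with
      | zero =>
        intro x _ l hl hlen
        have h3 := h2 (fun i => l.get (i.cast (by omega)))
          (fun i => hl _ (List.get_mem _ _))
        have h4 : List.ofFn (fun i : Fin n => l.get (i.cast (by omega))) = l := by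
          have hn' : n = l.length := by omega
          subst hn'
          exact List.ofFn_get l
        rw [h4] at h3
        rw [h3, zero_mul]
      | succ m ih =>
        intro x hx l hl hlen
        rw [Ideal.IsTwoSided.pow_succ] at hx
        refine Submodule.smul_induction_on hx ?_ ?_
        · intro r hr t ht
          have := ih t ht (l ++ [r]) (by
            intro y hy
            rw [List.mem_append, List.mem_singleton] at hy
            rcases hy with hy | rfl
            · exact hl y hy
            · exact hr) (by simp; omega)
          rw [List.prod_append, List.prod_singleton, mul_assoc] at this
          exact this
        · intro a b ha hb
          rw [mul_add, ha, hb, add_zero]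
    refine (Submodule.eq_bot_iff _).mpr fun x hx => ?_
    simpa using key n x hx [] (by simp) (by simp)

theorem exists_simple_sub {A : Type u} [Ring A] [IsSemiprimaryRing A]
    (M : Type u) [AddCommGroup M] [Module A M] :
    Nontrivial M → ∃ N : Submodule A M, IsSimpleModule A N := by
  refine IsSemiprimaryRing.induction A A M
    (P := fun M _ _ _ => Nontrivial M → ∃ N : Submodule A M, IsSimpleModule A N) ?_ ?_
  · intro M _ _ _ _ _ _ _
    exact IsSemisimpleModule.exists_simple_submodule A M
  · intro M _ _ _ _ N h1 h2 hM
    rcases subsingleton_or_nontrivial N with h | h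
    · have hN : N = ⊥ := (Submodule.subsingleton_iff_eq_bot).mp h
      let e : (M ⧸ N) ≃ₗ[A] M := Submodule.quotEquivOfEqBot N hN
      obtain ⟨P, hP⟩ := h2 e.toEquiv.nontrivial
      exact ⟨P.map e.toLinearMap, IsSimpleModule.congr (e.submoduleMap P).symm⟩
    · obtain ⟨P, hP⟩ := h1 h
      exact ⟨P.map N.subtype,
        IsSimpleModule.congr (P.equivMapOfInjective N.subtype N.injective_subtype).symm⟩

/-- extension by right multiplication -/
theorem ext_mul {A : Type u} [Ring A] (hinj : Module.Injective A A)
    {S : Type u} [AddCommGroup S] [Module A S] (f g : S →ₗ[A] A) (hf : Function.Injective f) :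
    ∃ a : A, ∀ s, g s = f s * a := by
  obtain ⟨h, hh⟩ := hinj.out f hf g
  refine ⟨h 1, fun s => ?_⟩
  rw [← hh s, ← smul_eq_mul, ← map_smul, smul_eq_mul, mul_one]

/-- right multiplication composite -/
def mulR {A : Type u} [Ring A] {S : Type u} [AddCommGroup S] [Module A S] (f : S →ₗ[A] A) (k : A) :
    S →ₗ[A] A := (LinearMap.toSpanSingleton A A k).comp f

@[simp] theorem mulR_apply {A : Type u} [Ring A] {S : Type u} [AddCommGroup S] [Module A S]
    (f : S →ₗ[A] A) (k : A) (s : S) : mulR f k s = f s * k := rfl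

theorem isNilp {A : Type u} [Ring A] [IsSemiprimaryRing A] (x : A) (hx : x ∈ Ring.jacobson A) :
    IsNilpotent x := by
  obtain ⟨n, hn⟩ := IsSemiprimaryRing.isNilpotent (R := A)
  refine ⟨n, ?_⟩
  have := Ideal.pow_mem_pow hx n
  rw [hn] at this
  simpa using this

theorem mul_jac {A : Type u} [Ring A] [IsSemiprimaryRing A] (hinj : Module.Injective A A)
    {S : Type u} [AddCommGroup S] [Module A S] [IsSimpleModule A S] (f : S →ₗ[A] A)
    (j : A) (hj : j ∈ Ring.jacobson A) (s : S) : f s * j = 0 := by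
  by_contra hne
  have h0 : mulR f j ≠ 0 := fun h => hne (by simpa using LinearMap.congr_fun h s)
  obtain ⟨a, ha⟩ := ext_mul hinj (mulR f j) f (LinearMap.injective_of_ne_zero h0)
  have hu : IsUnit (1 - j * a) :=
    (isNilp _ (Ideal.mul_mem_right a _ hj)).isUnit_one_sub
  have h1 : f s * (1 - j * a) = 0 := by
    rw [mul_sub, mul_one, ← mul_assoc, ← mulR_apply, ← ha, sub_self]
  rw [hu.mul_left_eq_zero] at h1
  exact hne (by rw [h1, zero_mul])

theorem mem_jac_of_soc {A : Type u} [Ring A] [IsSemiprimaryRing A] (hinj : Module.Injective A A)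
    (a : A) (h : ∀ N : Submodule A A, IsSimpleModule A N → ∀ x ∈ N, x * a = 0) :
    a ∈ Ring.jacobson A := by
  have hr : ∀ b, ∃ c, (1 + a * b) * c = 1 := by
    intro b
    have hi : Function.Injective (LinearMap.toSpanSingleton A A (1 + a * b)) := by
      rw [← LinearMap.ker_eq_bot]
      by_contra hne
      obtain ⟨P, hP⟩ := exists_simple_sub (A := A) (LinearMap.ker (LinearMap.toSpanSingleton A A (1 + a * b)))
        (Submodule.nontrivial_iff_ne_bot.mpr hne)
      obtain ⟨p, hp0⟩ := @exists_ne _ (IsSimpleModule.nontrivial A P) 0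
      have h1 := h (P.map (Submodule.subtype _))
        (IsSimpleModule.congr (P.equivMapOfInjective _ (Submodule.injective_subtype _)).symm)
        p.1.1 ⟨p.1, p.2, rfl⟩
      have h2 : p.1.1 * (1 + a * b) = 0 := p.1.2
      rw [mul_add, ← mul_assoc, h1, zero_mul, mul_one, add_zero] at h2
      exact hp0 (Subtype.ext (Subtype.ext h2))
    obtain ⟨c, hc⟩ := ext_mul hinj _ LinearMap.id hi
    exact ⟨c, by simpa using (hc 1).symm⟩
  rw [← Ideal.jacobson_bot, Ideal.mem_jacobson_iff]
  intro y
  obtain ⟨c, hc⟩ := hr y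
  obtain ⟨d, hd⟩ := hr (-(y * c))
  have hc' : 1 + a * -(y * c) = c := by
    have : c + a * (y * c) = 1 := by rw [← hc]; noncomm_ring
    rw [← this]; noncomm_ring
  rw [hc'] at hd
  have hcl : c * (1 + a * y) = 1 := by
    rw [left_inv_eq_right_inv hc hd, hd]
  refine ⟨1 - y * c * a, ?_⟩
  have : (1 - y * c * a) * y * a + (1 - y * c * a) - 1
      = y * a - y * (c * (1 + a * y)) * a := by noncomm_ring
  rw [this, hcl]; simp

/-- For a left self-injective semiprimary ring `A`, every simple left `A`-module `S`
embeds into `A` as a left module; equivalently, `Hom_A(S, A) ≠ 0`. -/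
theorem simple_embeds_of_selfinjective_semiprimary
    (A : Type u) [Ring A] (hsp : IsSemiprimary A) (hinj : Module.Injective A A) :
    ∀ (S : Type v) [AddCommGroup S] [Module A S], IsSimpleModule A S →
      (∃ f : S →ₗ[A] A, Function.Injective f) ∧ ∃ f : S →ₗ[A] A, f ≠ 0 := by
  intro S _ _ hS
  haveI := hsp.toRing
  suffices ∃ f : S →ₗ[A] A, f ≠ 0 by
    obtain ⟨f, hf⟩ := this
    exact ⟨⟨f, LinearMap.injective_of_ne_zero hf⟩, f, hf⟩
  set J := Ring.jacobson A with hJdef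
  haveI hss : IsSemisimpleModule A (A ⧸ J) := by
    have hb : Module.IsTorsionBySet A (A ⧸ J) (J : Set A) := by
      rw [Module.isTorsionBySet_quotient_iff]
      intro x r hr
      exact Ideal.mul_mem_right x J hr
    let _ := hb.module
    exact (hb.semilinearMap.isSemisimpleModule_iff_of_bijective Function.bijective_id).2
      inferInstance
  obtain ⟨n, P, e, hP⟩ := IsSemisimpleModule.exists_linearEquiv_fin_dfinsupp A (A ⧸ J)
  -- every simple module is isomorphic to one of the `P i`
  have hall : ∀ (T : Type u) [AddCommGroup T] [Module A T] [IsSimpleModule A T],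
      ∃ i, Nonempty (T ≃ₗ[A] P i) := by
    intro T _ _ hT
    haveI := IsSimpleModule.nontrivial A T
    obtain ⟨t, ht⟩ := exists_ne (0 : T)
    let q : (A ⧸ J) →ₗ[A] T := Submodule.liftQ J (LinearMap.toSpanSingleton A T t) (by
      intro r hr
      exact Module.mem_annihilator.mp (IsSemisimpleModule.jacobson_le_annihilator A T hr) t)
    have hq : Function.Surjective q := by
      intro y
      obtain ⟨r, hr⟩ := IsSimpleModule.toSpanSingleton_surjective A ht y
      exact ⟨Submodule.Quotient.mk r, hr⟩
    obtain ⟨g, hg⟩ := IsSemisimpleModule.lifting_property q hq LinearMap.id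
    have hg0 : e (g t) ≠ 0 := by
      intro h
      rw [LinearEquiv.map_eq_zero_iff] at h
      have := LinearMap.congr_fun hg t
      simp [h] at this
      exact ht this.symm
    obtain ⟨i, hi⟩ : ∃ i, e (g t) i ≠ 0 := by
      by_contra hcon
      push Not at hcon
      exact hg0 (DFinsupp.ext hcon)
    have := hP i
    let φ : T →ₗ[A] P i := (DFinsupp.lapply i).comp (e.toLinearMap.comp g)
    have hφ : φ ≠ 0 := fun h => hi (by simpa [φ] using LinearMap.congr_fun h t)
    exact ⟨i, ⟨LinearEquiv.ofBijective φ (LinearMap.bijective_of_ne_zero hφ)⟩⟩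
  let I : Fin n → Set A := fun i =>
    {k | ∀ j, ¬ Nonempty (P i ≃ₗ[A] P j) → ∀ u : P j, k • u = 0}
  have hI : ∀ i, ∃ k ∈ I i, k ∉ J := by
    intro i
    have := hP i
    obtain ⟨⟨x, hx⟩, hx0⟩ := @exists_ne _ (IsSimpleModule.nontrivial A (P i)) 0
    obtain ⟨k, rfl⟩ := Submodule.Quotient.mk_surjective J x
    refine ⟨k, ?_, fun hk => hx0 (Subtype.ext ((Submodule.Quotient.mk_eq_zero J).mpr hk))⟩
    intro j hj u
    have := hP j
    by_contra hne
    let q : (A ⧸ J) →ₗ[A] P j := Submodule.liftQ J (LinearMap.toSpanSingleton A (P j) u) (by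
      intro r hr
      exact Module.mem_annihilator.mp (IsSemisimpleModule.jacobson_le_annihilator A (P j) hr) u)
    have h0 : q.comp (P i).subtype ≠ 0 := fun h =>
      hne (LinearMap.congr_fun h ⟨Submodule.Quotient.mk k, hx⟩)
    exact hj ⟨LinearEquiv.ofBijective _ (LinearMap.bijective_of_ne_zero h0)⟩
  have hkill : ∀ r : A, (∀ j, ∀ u : P j, r • u = 0) → r ∈ J := by
    intro r hr
    rw [← Submodule.Quotient.mk_eq_zero J, ← e.map_eq_zero_iff]
    have : (Submodule.Quotient.mk r : A ⧸ J) = r • (Submodule.Quotient.mk 1 : A ⧸ J) := by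
      rw [← Submodule.Quotient.mk_smul, smul_eq_mul, mul_one]
    rw [this, map_smul]
    exact DFinsupp.ext fun j => hr j _
  -- the relation
  have hR : ∀ i, ∃ j, ∃ f : P j →ₗ[A] A, ∃ k ∈ I i, ∃ s, f s * k ≠ 0 := by
    intro i
    obtain ⟨k, hk, hkJ⟩ := hI i
    have : ¬ ∀ N : Submodule A A, IsSimpleModule A N → ∀ x ∈ N, x * k = 0 :=
      fun h => hkJ (mem_jac_of_soc hinj k h)
    push Not at this
    obtain ⟨N, hN, x, hx, hxk⟩ := this
    obtain ⟨j, ⟨ε⟩⟩ := hall N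
    exact ⟨j, N.subtype.comp ε.symm.toLinearMap, k, hk, ε ⟨x, hx⟩, by simpa using hxk⟩
  choose g hg using hR
  let st : Setoid (Fin n) :=
    { r := fun i j => Nonempty (P i ≃ₗ[A] P j)
      iseqv := ⟨fun _ => ⟨LinearEquiv.refl _ _⟩, fun ⟨a⟩ => ⟨a.symm⟩,
        fun ⟨a⟩ ⟨b⟩ => ⟨a.trans b⟩⟩ }
  have hwd : ∀ i i', Nonempty (P (g i) ≃ₗ[A] P (g i')) → Nonempty (P i ≃ₗ[A] P i') := by
    rintro i i' ⟨ε⟩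
    by_contra hne
    obtain ⟨f, k, hk, s, hs⟩ := hg i
    obtain ⟨f', k', hk', s', hs'⟩ := hg i'
    have := hP (g i)
    have h0 : mulR f k ≠ 0 := fun h => hs (by simpa using LinearMap.congr_fun h s)
    obtain ⟨a, ha⟩ := ext_mul hinj (mulR f k) (f'.comp ε.toLinearMap)
      (LinearMap.injective_of_ne_zero h0)
    have h1 := ha (ε.symm s')
    simp at h1
    have hmem : k * a * k' ∈ J := by
      apply hkill
      intro j u
      by_cases hj : Nonempty (P i ≃ₗ[A] P j)
      · have hj' : ¬ Nonempty (P i' ≃ₗ[A] P j) := fun ⟨b⟩ => hne ⟨hj.some.trans b.symm⟩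
        rw [mul_smul, hk' j hj', smul_zero]
      · rw [mul_assoc, mul_smul, hk j hj]
    apply hs'
    rw [h1, mul_assoc, mul_assoc, ← mul_assoc k a k']
    exact mul_jac hinj f _ hmem _
  let G : Quotient st → Quotient st := fun x => Quotient.mk st (g x.out)
  have hGi : Function.Injective G := by
    intro x y hxy
    have := hwd _ _ (Quotient.exact hxy)
    rw [← Quotient.out_eq x, ← Quotient.out_eq y]
    exact Quotient.sound this
  have hGs := Finite.surjective_of_injective hGi
  -- conclusion
  obtain ⟨M, hM, ⟨ε⟩⟩ := isSimpleModule_iff_quot_maximal.mp hS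
  have : IsSimpleModule A (A ⧸ M) := IsSimpleModule.congr ε.symm
  obtain ⟨j, ⟨ε'⟩⟩ := hall (A ⧸ M)
  obtain ⟨x, hx⟩ := hGs (Quotient.mk st j)
  obtain ⟨ε''⟩ : Nonempty (P (g x.out) ≃ₗ[A] P j) := Quotient.exact hx
  obtain ⟨f, k, -, s, hs⟩ := hg x.out
  refine ⟨f.comp ((ε.trans ε').trans ε''.symm).toLinearMap, fun h => hs ?_⟩
  have := LinearMap.congr_fun h (((ε.trans ε').trans ε''.symm).symm s)
  have h2 : f s = 0 := by simpa using this
  rw [h2, zero_mul]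
end

section
/- Let A be a left self-injective semiprimary ring and S a simple left A-module. Then Hom_A(S, A) is a simple right A-module; moreover it is generated as a right A-module by any of its nonzero elements. -/
universe u v

open Cardinal

namespace HomSimple

/-- Surjection onto a product of matrix rings with kernel the Jacobson radical. -/
lemma exists_hom (A : Type u) [Ring A] (hsp : IsSemiprimary A) :
    ∃ (n : ℕ) (D : Fin n → Type u) (d : Fin n → ℕ) (_ : ∀ i, DivisionRing (D i))
      (_ : ∀ i, NeZero (d i)) (p : A →+* Π i, Matrix (Fin (d i)) (Fin (d i)) (D i)),
      Function.Surjective p ∧ ∀ x, p x = 0 ↔ x ∈ Ring.jacobson A := by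
  obtain ⟨hss, -⟩ := hsp
  obtain ⟨n, D, d, hD, hd, ⟨e⟩⟩ := IsSemisimpleRing.exists_ringEquiv_pi_matrix_divisionRing
    (RingCon.Quotient (⊥ : TwoSidedIdeal A).jacobson.ringCon)
  refine ⟨n, D, d, hD, hd, e.toRingHom.comp (RingCon.mk' _), ?_, ?_⟩
  · exact e.surjective.comp (RingCon.mk'_surjective _)
  · intro x
    have h1 : (e.toRingHom.comp (RingCon.mk' (⊥ : TwoSidedIdeal A).jacobson.ringCon)) x = 0 ↔
        (RingCon.mk' (⊥ : TwoSidedIdeal A).jacobson.ringCon) x = 0 := by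
      simp
    rw [h1, ← TwoSidedIdeal.mem_ker, TwoSidedIdeal.ker_ringCon_mk', TwoSidedIdeal.mem_jacobson_iff,
      ← Ideal.jacobson_bot, Ideal.mem_jacobson_iff]
    simp

lemma isNilpotent_of_mem {A : Type u} [Ring A] (hsp : IsSemiprimary A) {x : A}
    (hx : x ∈ Ring.jacobson A) : IsNilpotent x := by
  obtain ⟨-, n, -, h⟩ := hsp
  refine ⟨n, ?_⟩
  have := h (fun _ => x) (fun _ => by rwa [Ideal.jacobson_bot])
  simpa using this

lemma exists_idem (A : Type u) [Ring A] (hsp : IsSemiprimary A) :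
    ∃ (n : ℕ) (e : Fin n → A), (∀ i, e i * e i = e i) ∧ (∀ i, e i ∉ Ring.jacobson A) ∧
      (∀ i j, i ≠ j → ∀ y, e i * y * e j ∈ Ring.jacobson A) ∧
      (∀ i y, e i * y * e i ∈ Ring.jacobson A ∨
        ∃ z, z * (e i * y * e i) - e i ∈ Ring.jacobson A) ∧
      (∀ I : Ideal A, Ring.jacobson A ≤ I → (∀ i x, e i * x ∈ I) → (1 : A) ∈ I) := by
  classical
  obtain ⟨n, D, d, hD, hd, p, hp, hker⟩ := exists_hom A hsp
  have hnil : ∀ x ∈ RingHom.ker p, IsNilpotent x := fun x hx =>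
    isNilpotent_of_mem hsp ((hker x).1 hx)
  have key : ∀ i : Fin n, ∃ e : A, IsIdempotentElem e ∧ p e = Pi.single i (Matrix.single 0 0 1) := by
    intro i
    refine exists_isIdempotentElem_eq_of_ker_isNilpotent p hnil _ (hp _) ?_
    unfold IsIdempotentElem
    rw [← Pi.single_mul]
    simp
  choose e he hpe using key
  have hsub : ∀ x y, p x = p y → x - y ∈ Ring.jacobson A := by
    intro x y h
    rw [← hker, map_sub, h, sub_self]
  have heye : ∀ (i : Fin n) y, p (e i * y * e i) = Pi.single i (Matrix.single 0 0 (p y i 0 0)) := by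
    intro i y
    rw [map_mul, map_mul, hpe]
    ext1 k
    by_cases hk : k = i
    · subst hk
      simp [Matrix.single_mul_mul_single]
    · simp [hk]
  refine ⟨n, e, fun i => he i, ?_, ?_, ?_, ?_⟩
  · intro i hi
    rw [← hker, hpe] at hi
    have := congrFun (congrFun (congrFun hi i) 0) 0
    simp at this
  · intro i j hij y
    rw [← hker, map_mul, map_mul, hpe, hpe]
    ext1 k
    by_cases hk : k = i
    · subst hk
      simp [hij]
    · simp [hk]
  · intro i y
    by_cases h0 : p y i 0 0 = 0
    · left
      rw [← hker, heye, h0]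
      simp
    · right
      obtain ⟨z, hz⟩ := hp (Pi.single i (Matrix.single 0 0 (p y i 0 0)⁻¹))
      refine ⟨z, hsub _ _ ?_⟩
      rw [map_mul, heye, hz, hpe, ← Pi.single_mul]
      simp [h0]
  · intro I hJ hI
    choose a ha using fun (i : Fin n) (k : Fin (d i)) =>
      hp (Pi.single i (Matrix.single k 0 1))
    choose b hb using fun (i : Fin n) (k : Fin (d i)) =>
      hp (Pi.single i (Matrix.single 0 k 1))
    have h1 : 1 - ∑ i, ∑ k, a i k * (e i * b i k) ∈ I := by
      apply hJ
      apply hsub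
      simp only [map_one, map_sum, map_mul, ha, hb, hpe, ← Pi.single_mul,
        Matrix.single_mul_single_same, mul_one]
      ext1 j
      rw [Finset.sum_apply, Finset.sum_eq_single j]
      · rw [Finset.sum_apply]
        simp only [Pi.single_eq_same, Pi.one_apply]
        ext x y
        rw [Matrix.sum_apply]
        by_cases hxy : x = y
        · subst hxy
          rw [Finset.sum_eq_single x]
          · simp
          · intro k _ hk
            simp [Matrix.single_apply, hk]
          · simp
        · rw [Finset.sum_eq_zero]
          · simp [hxy]
          · intro k _
            rw [Matrix.single_apply, if_neg]
            rintro ⟨rfl, h⟩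
            exact hxy h
      · intro i _ hi
        rw [Finset.sum_apply]
        exact Finset.sum_eq_zero fun k _ => by simp [Ne.symm hi]
      · simp
    have h2 : ∑ i, ∑ k, a i k * (e i * b i k) ∈ I :=
      I.sum_mem fun i _ => I.sum_mem fun k _ => I.mul_mem_left _ (hI i _)
    simpa using I.add_mem h1 h2

lemma jac_smul {A : Type u} [Ring A] (S : Type v) [AddCommGroup S] [Module A S]
    [IsSimpleModule A S] {x : A} (hx : x ∈ Ring.jacobson A) (s : S) : x • s = 0 :=
  Module.mem_annihilator.1 (IsSemisimpleModule.jacobson_le_annihilator A S hx) s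

lemma ann_iff {A : Type u} [Ring A] {e : A}
    (h : ∀ y, e * y * e ∈ Ring.jacobson A ∨ ∃ z, z * (e * y * e) - e ∈ Ring.jacobson A)
    (S : Type v) [AddCommGroup S] [Module A S] [IsSimpleModule A S] {s : S} (hs : s ≠ 0)
    (hes : e • s = s) (r : A) : r • s = 0 ↔ ∀ x, e * (x * r) * e ∈ Ring.jacobson A := by
  constructor
  · intro hr x
    rcases h (x * r) with h | ⟨z, hz⟩
    · exact h
    · have := jac_smul S hz s
      simp only [sub_smul, mul_smul, hes, hr, smul_zero, zero_sub, neg_eq_zero] at this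
      exact absurd this hs
  · intro hr
    by_contra h0
    obtain ⟨x, hx⟩ := IsSimpleModule.toSpanSingleton_surjective A h0 s
    rw [LinearMap.toSpanSingleton_apply] at hx
    have := jac_smul S (hr x) s
    simp only [mul_smul, hes, hx] at this
    exact hs this

lemma exists_equiv {A : Type u} [Ring A] {e : A} (hee : e * e = e)
    (h : ∀ y, e * y * e ∈ Ring.jacobson A ∨ ∃ z, z * (e * y * e) - e ∈ Ring.jacobson A)
    (S : Type v) [AddCommGroup S] [Module A S] [IsSimpleModule A S]
    (T : Type*) [AddCommGroup T] [Module A T] [IsSimpleModule A T]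
    (hS : ∃ s : S, e • s ≠ 0) (hT : ∃ t : T, e • t ≠ 0) : Nonempty (S ≃ₗ[A] T) := by
  obtain ⟨s, hs⟩ := hS
  obtain ⟨t, ht⟩ := hT
  have hk : LinearMap.ker (LinearMap.toSpanSingleton A S (e • s)) =
      LinearMap.ker (LinearMap.toSpanSingleton A T (e • t)) := by
    ext r
    rw [LinearMap.mem_ker, LinearMap.mem_ker, LinearMap.toSpanSingleton_apply,
      LinearMap.toSpanSingleton_apply, ann_iff h S hs (by rw [smul_smul, hee]),
      ann_iff h T ht (by rw [smul_smul, hee])]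
  exact ⟨(LinearMap.quotKerEquivOfSurjective _
      (IsSimpleModule.toSpanSingleton_surjective A hs)).symm ≪≫ₗ
    Submodule.quotEquivOfEq _ _ hk ≪≫ₗ
    LinearMap.quotKerEquivOfSurjective _ (IsSimpleModule.toSpanSingleton_surjective A ht)⟩

lemma exists_simple_le {A : Type u} [Ring A] (hsp : IsSemiprimary A) {x : A} (hx : x ≠ 0) :
    ∃ T : Submodule A A, IsSimpleModule A T ∧ T ≤ Submodule.span A {x} := by
  have h1 : ∃ r : A, r * x ≠ 0 ∧ ∀ j ∈ Ring.jacobson A, j * (r * x) = 0 := by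
    by_contra! hc
    have : ∀ k : ℕ, ∃ f : Fin k → A, (∀ i, f i ∈ Ring.jacobson A) ∧
        (List.ofFn f).prod * x ≠ 0 := by
      intro k
      induction k with
      | zero => exact ⟨Fin.elim0, fun i => i.elim0, by simpa using hx⟩
      | succ k ih =>
        obtain ⟨f, hf, hfx⟩ := ih
        obtain ⟨j, hj, hjx⟩ := hc _ hfx
        refine ⟨Fin.cons j f, ?_, ?_⟩
        · intro i
          refine Fin.cases ?_ ?_ i
          · simpa using hj
          · intro i
            simpa using hf i
        · simpa [List.ofFn_succ, mul_assoc] using hjx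
    obtain ⟨-, n, -, hn⟩ := hsp
    obtain ⟨f, hf, hfx⟩ := this n
    rw [hn f (by simpa [Ideal.jacobson_bot] using hf), zero_mul] at hfx
    exact hfx rfl
  obtain ⟨r, hr, hj⟩ := h1
  have hss : IsSemisimpleRing (A ⧸ Ring.jacobson A) := by
    have := hsp.1
    have hle : ∀ a, (RingCon.mk' (⊥ : TwoSidedIdeal A).jacobson.ringCon) a = 0 →
        Ideal.Quotient.mk (Ring.jacobson A) a = 0 := by
      intro a ha
      rw [← TwoSidedIdeal.mem_ker, TwoSidedIdeal.ker_ringCon_mk', TwoSidedIdeal.mem_jacobson_iff]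
        at ha
      rw [Ideal.Quotient.eq_zero_iff_mem, ← Ideal.jacobson_bot, Ideal.mem_jacobson_iff]
      simpa using ha
    refine RingHom.isSemisimpleRing_of_surjective
      (RingHom.liftOfSurjective (RingCon.mk' (⊥ : TwoSidedIdeal A).jacobson.ringCon)
        (RingCon.mk'_surjective _) ⟨Ideal.Quotient.mk (Ring.jacobson A), hle⟩) ?_
    intro y
    obtain ⟨a, rfl⟩ := Ideal.Quotient.mk_surjective y
    exact ⟨RingCon.mk' _ a, RingHom.liftOfRightInverse_comp_apply _ _ _ _ a⟩
  set L : Submodule A A := { carrier := {y | y ∈ Submodule.span A {x} ∧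
                               ∀ j ∈ Ring.jacobson A, j * y = 0}
                             add_mem' := fun {a b} ha hb => ⟨Submodule.add_mem _ ha.1 hb.1,
                               fun j hj => by rw [mul_add, ha.2 j hj, hb.2 j hj, add_zero]⟩
                             zero_mem' := ⟨Submodule.zero_mem _, fun j _ => mul_zero j⟩
                             smul_mem' := fun c a ha => ⟨Submodule.smul_mem _ c ha.1,
                               fun j hj => by
                                 rw [smul_eq_mul, ← mul_assoc]
                                 exact ha.2 _ (Ideal.mul_mem_right _ _ hj)⟩ } with hL
  have htor : Module.IsTorsionBySet A L (Ring.jacobson A : Set A) := by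
    rintro ⟨y, hy⟩ ⟨j, hj⟩
    exact Subtype.ext (hy.2 j hj)
  have hLss : IsSemisimpleModule A L := by
    letI := htor.module
    exact htor.isSemisimpleModule_iff.1 inferInstance
  rcases IsSemisimpleModule.eq_bot_or_exists_simple_le L with h | ⟨T, hTL, hT⟩
  · have : r * x ∈ L := ⟨Submodule.smul_mem _ r (Submodule.mem_span_singleton_self x), hj⟩
    rw [h, Submodule.mem_bot] at this
    exact absurd this hr
  · exact ⟨T, hT, fun y hy => (hTL hy).1⟩

lemma gen {A : Type u} [Ring A] (hinj : Module.Injective A A)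
    (S : Type v) [AddCommGroup S] [Module A S] [IsSimpleModule A S]
    (f g : S →ₗ[A] A) (hf : f ≠ 0) : ∃ a : A, ∀ s, g s = f s * a := by
  have hfi := LinearMap.injective_of_ne_zero hf
  have hb : Module.Baer A A := Module.Baer.iff_injective.2 hinj
  let φ := LinearEquiv.ofInjective f hfi
  obtain ⟨h, hh⟩ := hb (LinearMap.range f) (g ∘ₗ φ.symm.toLinearMap)
  refine ⟨h 1, fun s => ?_⟩
  have h1 := hh (f s) ⟨s, rfl⟩
  have h2 : φ.symm ⟨f s, ⟨s, rfl⟩⟩ = s := by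
    rw [LinearEquiv.symm_apply_eq]
    rfl
  rw [LinearMap.comp_apply, LinearEquiv.coe_coe, h2] at h1
  rw [← h1, ← smul_eq_mul, ← map_smul, smul_eq_mul, mul_one]

lemma mul_jac {A : Type u} [Ring A] (hsp : IsSemiprimary A) (hinj : Module.Injective A A)
    (S : Type v) [AddCommGroup S] [Module A S] [IsSimpleModule A S]
    (f : S →ₗ[A] A) {x : A} (hx : x ∈ Ring.jacobson A) (s : S) : f s * x = 0 := by
  by_contra h
  let g : S →ₗ[A] A := LinearMap.toSpanSingleton A A x ∘ₗ f
  have hg : ∀ s, g s = f s * x := fun s => by simp [g]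
  have hg0 : g ≠ 0 := fun h0 => h (by rw [← hg, h0]; rfl)
  obtain ⟨a, ha⟩ := gen hinj S g f hg0
  obtain ⟨n, hn⟩ := isNilpotent_of_mem hsp (Ideal.mul_mem_right a _ hx)
  have : ∀ k : ℕ, f s = f s * (x * a) ^ k := by
    intro k
    induction k with
    | zero => simp
    | succ k ih =>
      rw [pow_succ, ← mul_assoc, ← ih, ← mul_assoc, ← hg, ← ha]
  apply h
  rw [this n, hn, mul_zero, zero_mul]

lemma exists_ne_zero {A : Type u} [Ring A] (hsp : IsSemiprimary A) (hinj : Module.Injective A A)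
    (S : Type v) [AddCommGroup S] [Module A S] [IsSimpleModule A S] :
    ∃ f : S →ₗ[A] A, f ≠ 0 := by
  obtain ⟨n, e, hee, he0, horth, hdiv, hgen⟩ := exists_idem A hsp
  have hex : ∀ (T : Type (max u v)) [AddCommGroup T] [Module A T] [IsSimpleModule A T],
      ∃ i, ∃ t : T, e i • t ≠ 0 := by
    intro T _ _ _
    by_contra! hc
    have := IsSimpleModule.nontrivial A T
    obtain ⟨t, ht⟩ := exists_ne (0 : T)
    have := hgen (LinearMap.ker (LinearMap.toSpanSingleton A T t))
      (fun x hx => by simpa using jac_smul T hx t)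
      (fun i x => by simpa [mul_smul] using hc i (x • t))
    exact ht (by simpa using this)
  have hσ : ∀ j, ∃ i, ∃ T : Submodule A A, IsSimpleModule A T ∧
      T ≤ Submodule.span A {e j} ∧ ∃ t : T, e i • t ≠ 0 := by
    intro j
    obtain ⟨T, hT, hle⟩ := exists_simple_le hsp (x := e j)
      (fun h => he0 j (h ▸ Submodule.zero_mem _))
    have : IsSimpleModule A (ULift.{v} T) := IsSimpleModule.congr ULift.moduleEquiv
    obtain ⟨i, t, ht⟩ := hex (ULift.{v} T)
    exact ⟨i, T, hT, hle, t.down, fun h => ht (ULift.ext _ _ h)⟩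
  choose σ T hT hle ht using hσ
  have hfix : ∀ j (y : A), y ∈ T j → y * e j = y := by
    intro j y hy
    obtain ⟨a, rfl⟩ := Submodule.mem_span_singleton.1 (hle j hy)
    rw [smul_eq_mul, mul_assoc, hee]
  have hinjσ : Function.Injective σ := by
    intro j j' hjj
    by_contra hne
    have hj := hT j
    have hj' := hT j'
    obtain ⟨φ⟩ := exists_equiv (hee (σ j)) (hdiv (σ j)) (T j) (T j') (ht j) (hjj ▸ ht j')
    have := IsSimpleModule.nontrivial A (T j)
    obtain ⟨t, ht0⟩ := exists_ne (0 : T j)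
    have hf : (T j).subtype ≠ 0 := fun h => ht0 (Subtype.ext (by simpa using LinearMap.congr_fun h t))
    obtain ⟨a, ha⟩ := gen hinj (T j) (T j).subtype ((T j').subtype ∘ₗ φ.toLinearMap) hf
    have h1 : (φ t : A) = t * a := ha t
    have h2 : (φ t : A) = (T j).subtype t * (e j * a * e j') := by
      rw [← hfix j' _ (φ t).2, h1, Submodule.subtype_apply, ← mul_assoc, ← mul_assoc,
        hfix j _ t.2]
    rw [mul_jac hsp hinj (T j) _ (horth j j' hne a)] at h2
    have h3 : φ t = 0 := Subtype.ext h2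
    exact ht0 (by simpa using h3)
  have hsurj : Function.Surjective σ := Finite.surjective_of_injective hinjσ
  have : IsSimpleModule A (ULift.{u} S) := IsSimpleModule.congr ULift.moduleEquiv
  obtain ⟨i, s, hs⟩ := hex (ULift.{u} S)
  obtain ⟨j, rfl⟩ := hsurj i
  have hj := hT j
  obtain ⟨φ⟩ := exists_equiv (hee (σ j)) (hdiv (σ j)) S (T j)
    ⟨s.down, fun h => hs (ULift.ext _ _ h)⟩ (ht j)
  have := IsSimpleModule.nontrivial A S
  obtain ⟨t, ht0⟩ := exists_ne (0 : S)
  refine ⟨(T j).subtype ∘ₗ φ.toLinearMap, fun h => ht0 ?_⟩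
  have h3 : φ t = 0 := Subtype.ext (by simpa using LinearMap.congr_fun h t)
  simpa using h3

end HomSimple

/-- For a left self-injective semiprimary ring `A` and a simple left `A`-module `S`,
the right `A`-module `Hom_A(S, A)` is simple, and it is generated by any of its
nonzero elements. -/
theorem hom_simple_is_simple_of_selfinjective_semiprimary
    (A : Type u) [Ring A] (hsp : IsSemiprimary A) (hinj : Module.Injective A A)
    (S : Type v) [AddCommGroup S] [Module A S] (hS : IsSimpleModule A S) :
    IsSimpleModule Aᵐᵒᵖ (S →ₗ[A] A) ∧
    ∀ f : S →ₗ[A] A, f ≠ 0 → Submodule.span Aᵐᵒᵖ {f} = ⊤ := by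
  have key : ∀ f g : S →ₗ[A] A, f ≠ 0 → ∃ a : Aᵐᵒᵖ, a • f = g := by
    intro f g hf
    obtain ⟨a, ha⟩ := HomSimple.gen hinj S f g hf
    exact ⟨MulOpposite.op a, LinearMap.ext fun s => by simp [ha s]⟩
  constructor
  · rw [isSimpleModule_iff_toSpanSingleton_surjective]
    obtain ⟨f, hf⟩ := HomSimple.exists_ne_zero hsp hinj S
    refine ⟨⟨f, 0, hf⟩, fun f hf g => ?_⟩
    obtain ⟨a, ha⟩ := key f g hf
    exact ⟨a, by simpa using ha⟩
  · intro f hf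
    rw [eq_top_iff]
    intro g _
    exact Submodule.mem_span_singleton.2 (key f g hf)
end

section
/- A left self-injective semiprimary ring A is an injective cogenerator of the category of left A-modules, i.e. A is a left PF (pseudo-Frobenius) ring. -/
universe u v

open Cardinal

theorem pf_ext {A : Type u} [Ring A] (hB : Module.Baer A A) {M : Type*} [AddCommGroup M]
    [Module A M] (m : M) (s : A) (h : ∀ a : A, a • m = 0 → a * s = 0) :
    ∃ f : M →ₗ[A] A, f m = s := by
  let k := LinearMap.toSpanSingleton A M m
  let i : (A ⧸ LinearMap.ker k) →ₗ[A] M := (LinearMap.ker k).liftQ k le_rfl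
  have hi : Function.Injective i := by
    rw [← LinearMap.ker_eq_bot]
    exact Submodule.ker_liftQ_eq_bot _ _ _ le_rfl
  let g : (A ⧸ LinearMap.ker k) →ₗ[A] A :=
    (LinearMap.ker k).liftQ (LinearMap.toSpanSingleton A A s) (by
      intro a ha
      have : a • m = 0 := by simpa [k] using ha
      simpa using h a this)
  obtain ⟨f, hf⟩ := hB.extension_property i hi g
  refine ⟨f, ?_⟩
  have := LinearMap.congr_fun hf (Submodule.Quotient.mk 1)
  simpa [i, g, k] using this

theorem pf_extr {A : Type u} [Ring A] (hB : Module.Baer A A) (t s : A)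
    (h : ∀ a : A, a * t = 0 → a * s = 0) : ∃ r, t * r = s := by
  obtain ⟨f, hf⟩ := pf_ext hB t s (by simpa using h)
  refine ⟨f 1, ?_⟩
  rw [← hf, ← smul_eq_mul, ← map_smul]; simp

/-- `t` generates a simple left ideal. -/
def PfSmp {A : Type u} [Ring A] (t : A) : Prop :=
  t ≠ 0 ∧ ∀ a : A, a * t ≠ 0 → ∃ b, b * (a * t) = t

theorem PfSmp.simple {A : Type u} [Ring A] {t : A} (h : PfSmp t) :
    IsSimpleModule A (Submodule.span A {t}) := by
  rw [isSimpleModule_iff_isAtom]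
  refine ⟨by simpa using h.1, fun N hN => ?_⟩
  by_contra hne
  obtain ⟨x, hx, hx0⟩ := Submodule.exists_mem_ne_zero_of_ne_bot hne
  obtain ⟨a, rfl⟩ := Submodule.mem_span_singleton.1 (hN.le hx)
  obtain ⟨b, hb⟩ := h.2 a hx0
  refine hN.not_ge ?_
  rw [Submodule.span_singleton_le_iff_mem]
  have := N.smul_mem b hx
  simpa [hb] using this

theorem PfSmp.of_simple {A : Type u} [Ring A] {N : Submodule A A} [hN : IsSimpleModule A N]
    {t : A} (ht : t ∈ N) (ht0 : t ≠ 0) : PfSmp t := by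
  refine ⟨ht0, fun a ha => ?_⟩
  have h1 := isSimpleModule_iff_isAtom.1 hN
  have h2 : Submodule.span A {a * t} = N := by
    refine (h1.le_iff.1 ?_).resolve_left (by simpa using ha)
    rw [Submodule.span_singleton_le_iff_mem]
    exact N.smul_mem a ht
  rw [← h2] at ht
  exact Submodule.mem_span_singleton.1 ht

theorem pf_unit {A : Type u} [Ring A] {x : A} (hx : x ∈ Ideal.jacobson (⊥ : Ideal A)) :
    IsUnit (1 - x) := by
  have key : ∀ y ∈ Ideal.jacobson (⊥ : Ideal A), ∃ z, z * (1 - y) = 1 := by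
    intro y hy
    obtain ⟨z, hz⟩ := Ideal.mem_jacobson_iff.1 hy (-1)
    refine ⟨z, ?_⟩
    have hz : z * -1 * y + z - 1 = 0 := by simpa using hz
    have : z * (1 - y) - 1 = z * -1 * y + z - 1 := by noncomm_ring
    rw [← sub_eq_zero, this, hz]
  obtain ⟨z, hz⟩ := key x hx
  obtain ⟨w, hw⟩ := key (-(z * x)) (neg_mem (Ideal.mul_mem_left _ _ hx))
  have e : 1 - -(z * x) = z := by
    rw [mul_sub, mul_one, sub_eq_iff_eq_add] at hz
    rw [sub_neg_eq_add, ← hz]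
  rw [e] at hw
  have hwx : w = 1 - x := by
    calc w = w * (z * (1 - x)) := by rw [hz, mul_one]
      _ = 1 - x := by rw [← mul_assoc, hw, one_mul]
  rw [hwx] at hw
  exact ⟨⟨1 - x, z, hw, hz⟩, rfl⟩

theorem PfSmp.mul_jac {A : Type u} [Ring A] (hB : Module.Baer A A) {t : A} (h : PfSmp t)
    {j : A} (hj : j ∈ Ideal.jacobson (⊥ : Ideal A)) : t * j = 0 := by
  by_contra hne
  obtain ⟨g, hg⟩ := pf_extr hB (t * j) t (by
    intro a ha
    by_contra hat
    obtain ⟨b, hb⟩ := h.2 a hat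
    apply hne
    rw [← hb, mul_assoc, mul_assoc, ha, mul_zero])
  have hu := pf_unit (Ideal.mul_mem_right g _ hj)
  apply h.1
  have : t * (1 - j * g) = 0 := by rw [mul_sub, ← mul_assoc, hg]; simp
  exact hu.mul_left_eq_zero.1 this

theorem pf_ideal_le {A : Type u} [Ring A] (hB : Module.Baer A A)
    (hat : ∀ x : A, x ≠ 0 → ∃ a, PfSmp (a * x)) (I : Ideal A) [I.IsTwoSided]
    (h : ∀ t, PfSmp t → ∀ a ∈ I, t * a = 0) : I ≤ Ideal.jacobson (⊥ : Ideal A) := by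
  have key : ∀ a ∈ I, ∃ g, (1 + a) * g = 1 := by
    intro a ha
    apply pf_extr hB
    intro b hb
    by_contra hb0
    obtain ⟨c, hc⟩ := hat b (by simpa using hb0)
    apply hc.1
    have h1 := h _ hc a ha
    have : c * b * (1 + a) = 0 := by rw [mul_assoc, hb, mul_zero]
    rwa [mul_add, h1, mul_one, add_zero] at this
  intro a ha
  rw [Ideal.mem_jacobson_iff]
  intro y
  have hya := I.mul_mem_left y ha
  obtain ⟨g, hg⟩ := key _ hya
  obtain ⟨k, hk⟩ := key (-(y * a * g)) (neg_mem (Ideal.mul_mem_right _ _ hya))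
  have e : 1 + -(y * a * g) = g := by
    rw [add_mul, one_mul] at hg
    rw [← hg]; abel
  rw [e] at hk
  have : k = 1 + y * a := by
    calc k = (1 + y * a) * g * k := by rw [hg, one_mul]
      _ = 1 + y * a := by rw [mul_assoc, hk, mul_one]
  rw [this] at hk
  refine ⟨g, ?_⟩
  rw [Ideal.mem_bot, sub_eq_zero, ← hk]
  noncomm_ring

theorem pf_semisimple {A : Type u} [Ring A] (hsp : IsSemiprimary A) :
    IsSemisimpleModule A (A ⧸ Ideal.jacobson (⊥ : Ideal A)) := by
  have hs := hsp.1
  set c := (⊥ : TwoSidedIdeal A).jacobson.ringCon with hc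
  have hmem : ∀ x : A, c x 0 ↔ x ∈ Ideal.jacobson (⊥ : Ideal A) := by
    intro x
    rw [hc, ← TwoSidedIdeal.mem_iff, TwoSidedIdeal.mem_jacobson_iff, Ideal.mem_jacobson_iff]
    simp [TwoSidedIdeal.mem_bot]
  have hz : ∀ x : A, c.mk' x = 0 ↔ x ∈ Ideal.jacobson (⊥ : Ideal A) := by
    intro x
    rw [← hmem]
    exact RingCon.eq c
  have hsurj : Function.Surjective c.mk' := RingCon.mk'_surjective c
  have : RingHomSurjective c.mk' := ⟨hsurj⟩
  let l0 : A →ₛₗ[c.mk'] c.Quotient := c.mk'.toSemilinearMap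
  let l : (A ⧸ Ideal.jacobson (⊥ : Ideal A)) →ₛₗ[c.mk'] c.Quotient :=
    Submodule.liftQ _ l0 (fun x hx => (hz x).2 hx)
  have hl : Function.Bijective l := by
    constructor
    · rw [← LinearMap.ker_eq_bot]
      exact Submodule.ker_liftQ_eq_bot _ _ _ (fun x hx => (hz x).1 hx)
    · intro q
      obtain ⟨x, rfl⟩ := hsurj q
      exact ⟨Submodule.Quotient.mk x, rfl⟩
  exact (l.isSemisimpleModule_iff_of_bijective hl).2 hs

theorem pf_atomic {A : Type u} [Ring A] (hsp : IsSemiprimary A) (x : A) (hx : x ≠ 0) :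
    ∃ a, PfSmp (a * x) := by
  obtain ⟨n, -, hn⟩ := hsp.2
  have hss := pf_semisimple hsp
  have key : ∀ (n : ℕ) (x : A), x ≠ 0 →
      (∀ l : List A, l.length = n → (∀ y ∈ l, y ∈ Ideal.jacobson (⊥ : Ideal A)) →
        l.prod * x = 0) →
      ∃ a, a * x ≠ 0 ∧ ∀ j ∈ Ideal.jacobson (⊥ : Ideal A), j * (a * x) = 0 := by
    intro n
    induction n with
    | zero =>
      intro x hx h
      exact absurd (by simpa using h [] rfl (by simp)) hx
    | succ n ih =>
      intro x hx h
      by_cases hJ : ∀ j ∈ Ideal.jacobson (⊥ : Ideal A), j * x = 0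
      · exact ⟨1, by simpa using hx, by simpa using hJ⟩
      · push Not at hJ
        obtain ⟨j, hj, hjx⟩ := hJ
        obtain ⟨a, ha, haJ0⟩ := ih (j * x) hjx (by
          intro l hl hlJ
          have := h (l ++ [j]) (by simp [hl]) (by
            intro y hy
            rcases List.mem_append.1 hy with hy | hy
            · exact hlJ y hy
            · rw [List.mem_singleton.1 hy]; exact hj)
          simpa [mul_assoc] using this)
        exact ⟨a * j, by rwa [mul_assoc], by simpa [mul_assoc] using haJ0⟩
  obtain ⟨a, ha, haJ⟩ := key n x hx (by
    intro l hl hlJ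
    subst hl
    have := hn l.get (fun i => hlJ _ (l.get_mem i))
    rw [List.ofFn_get] at this
    rw [this, zero_mul])
  let f : (A ⧸ Ideal.jacobson (⊥ : Ideal A)) →ₗ[A] A :=
    Submodule.liftQ _ (LinearMap.toSpanSingleton A A (a * x)) (by
      intro j hj
      simpa using haJ j hj)
  have hf : ∀ b : A, f (Submodule.Quotient.mk b) = b * (a * x) := fun b => rfl
  have : IsSemisimpleModule A (LinearMap.range f) := .range f
  have hnb : LinearMap.range f ≠ ⊥ := by
    intro h
    have : f (Submodule.Quotient.mk 1) ∈ LinearMap.range f := ⟨_, rfl⟩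
    rw [h, hf] at this
    exact ha (by simpa using this)
  obtain ⟨N, hN, hNs⟩ := (IsSemisimpleModule.eq_bot_or_exists_simple_le
    (LinearMap.range f)).resolve_left hnb
  obtain ⟨t, ht, ht0⟩ := Submodule.exists_mem_ne_zero_of_ne_bot
    (isSimpleModule_iff_isAtom.1 hNs).1
  obtain ⟨q, hq⟩ := hN ht
  obtain ⟨b, rfl⟩ := Submodule.Quotient.mk_surjective _ q
  rw [hf] at hq
  refine ⟨b * a, ?_⟩
  rw [mul_assoc, hq]
  exact PfSmp.of_simple ht ht0

theorem pf_embed {A : Type u} [Ring A] (hsp : IsSemiprimary A) (S : Type u) [AddCommGroup S]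
    [Module A S] [hS : IsSimpleModule A S] :
    ∃ N : Submodule A (A ⧸ Ideal.jacobson (⊥ : Ideal A)), Nonempty (S ≃ₗ[A] N) := by
  have hss := pf_semisimple hsp
  obtain ⟨m, hm, ⟨e⟩⟩ := isSimpleModule_iff_quot_maximal.1 hS
  have hJ : Ideal.jacobson (⊥ : Ideal A) ≤ m := sInf_le ⟨bot_le, hm⟩
  let p : (A ⧸ Ideal.jacobson (⊥ : Ideal A)) →ₗ[A] S :=
    e.symm.toLinearMap ∘ₗ Submodule.factor hJ
  have hp : Function.Surjective p :=
    e.symm.surjective.comp (Submodule.factor_surjective hJ)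
  obtain ⟨h, hh⟩ := IsSemisimpleModule.lifting_property p hp LinearMap.id
  have hi : Function.Injective h := fun x y hxy => by
    have := congrArg p hxy
    have h1 := LinearMap.congr_fun hh x
    have h2 := LinearMap.congr_fun hh y
    simp only [LinearMap.comp_apply, LinearMap.id_apply] at h1 h2
    rwa [h1, h2] at this
  exact ⟨_, ⟨LinearEquiv.ofInjective h hi⟩⟩

theorem pf_select {A : Type u} [Ring A] (hsp : IsSemiprimary A) (hB : Module.Baer A A)
    (c : isotypicComponents A (A ⧸ Ideal.jacobson (⊥ : Ideal A))) :
    ∃ s : A, PfSmp s ∧ ∀ d : isotypicComponents A (A ⧸ Ideal.jacobson (⊥ : Ideal A)), d ≠ c →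
      ∀ x ∈ Submodule.comap (Submodule.mkQ _) d.1, s * x = 0 := by
  have two : ∀ d : isotypicComponents A (A ⧸ Ideal.jacobson (⊥ : Ideal A)), ∀ x r : A,
      x ∈ Submodule.comap (Submodule.mkQ (Ideal.jacobson (⊥ : Ideal A))) d.1 →
      x * r ∈ Submodule.comap (Submodule.mkQ (Ideal.jacobson (⊥ : Ideal A))) d.1 := by
    intro d x r hx
    let φ : Module.End A (A ⧸ Ideal.jacobson (⊥ : Ideal A)) :=
      Submodule.mapQ _ _ (LinearMap.toSpanSingleton A A r) (fun j hj => by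
        simpa using Ideal.mul_mem_right r _ hj)
    have := Submodule.IsFullyInvariant.of_mem_isotypicComponents d.2 φ hx
    exact this
  let I : Ideal A := Submodule.comap (Submodule.mkQ (Ideal.jacobson (⊥ : Ideal A))) c.1
  have : I.IsTwoSided := ⟨fun {a} b ha => two c a b ha⟩
  have hIJ : ¬ I ≤ Ideal.jacobson (⊥ : Ideal A) := by
    intro h
    apply (bot_lt_isotypicComponents c.2).ne'
    rw [eq_bot_iff]
    intro q hq
    obtain ⟨b, rfl⟩ := Submodule.Quotient.mk_surjective _ q
    rw [Submodule.mem_bot, Submodule.Quotient.mk_eq_zero]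
    exact h hq
  have hex : ¬ ∀ t, PfSmp t → ∀ a ∈ I, t * a = 0 := fun h =>
    hIJ (pf_ideal_le hB (pf_atomic hsp) I h)
  push Not at hex
  obtain ⟨t, ht, a, ha, hta⟩ := hex
  refine ⟨t * a, ⟨hta, fun b hb => ?_⟩, fun d hd x hx => ?_⟩
  · obtain ⟨k, hk⟩ := ht.2 b (fun h => hb (by rw [← mul_assoc, h, zero_mul]))
    exact ⟨k, by rw [← mul_assoc b, ← mul_assoc, hk]⟩
  · rw [mul_assoc]
    apply ht.mul_jac hB
    have h1 := two c a x ha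
    have h2 := Submodule.smul_mem _ a hx
    have hdis : Disjoint d.1 c.1 :=
      (sSupIndep_isotypicComponents A _).pairwiseDisjoint d.2 c.2 (fun h => hd (Subtype.ext h))
    have := Submodule.disjoint_def.1 hdis _ h2 h1
    exact (Submodule.Quotient.mk_eq_zero _).1 this

theorem pf_kasch {A : Type u} [Ring A] (hsp : IsSemiprimary A) (hB : Module.Baer A A)
    (m : Ideal A) (hm : m.IsMaximal) : ∃ x : A, x ≠ 0 ∧ ∀ a ∈ m, a * x = 0 := by
  have hss := pf_semisimple hsp
  let X := isotypicComponents A (A ⧸ Ideal.jacobson (⊥ : Ideal A))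
  have : IsNoetherian A (A ⧸ Ideal.jacobson (⊥ : Ideal A)) :=
    (IsSemisimpleModule.finite_tfae (R := A)
      (M := A ⧸ Ideal.jacobson (⊥ : Ideal A)).out 0 1 :
        Module.Finite A (A ⧸ Ideal.jacobson (⊥ : Ideal A)) ↔ _).1 inferInstance
  have hfin : Finite X := inferInstanceAs
    (Finite (isotypicComponents A (A ⧸ Ideal.jacobson (⊥ : Ideal A))))
  choose s hs hskill using pf_select hsp hB
  have hsimp : ∀ c, IsSimpleModule A (Submodule.span A {s c}) := fun c => (hs c).simple
  choose N e using fun c => pf_embed hsp (Submodule.span A {s c})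
  have hNs : ∀ c, IsSimpleModule A (N c) := fun c => IsSimpleModule.congr (e c).some.symm
  let τ : X → X := fun c => ⟨isotypicComponent A _ (N c), N c, hNs c, rfl⟩
  have hiso : ∀ c (S : Submodule A (A ⧸ Ideal.jacobson (⊥ : Ideal A))), IsSimpleModule A S →
      S ≤ (τ c).1 → Nonempty (S ≃ₗ[A] Submodule.span A {s c}) := by
    intro c S _ hS
    obtain ⟨f⟩ := isIsotypicOfType_submodule_iff.mp
      (IsIsotypicOfType.isotypicComponent A _ (N c)) S hS
    exact ⟨f.trans (e c).some.symm⟩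
  have hτ : Function.Injective τ := by
    intro c cc hcc
    by_contra hne
    obtain ⟨f⟩ := hiso cc (N c) (hNs c) (by
      rw [← hcc]; exact Submodule.le_isotypicComponent _)
    let g := (e c).some.trans f
    let y : Submodule.span A {s c} := ⟨s c, Submodule.mem_span_singleton_self _⟩
    have hy : y ≠ 0 := fun h => (hs c).1 (congrArg Subtype.val h)
    have hg0 : (g y : A) ≠ 0 := fun h => hy (by
      have : g y = 0 := Subtype.ext h
      simpa using this)
    obtain ⟨b, hb⟩ := Submodule.mem_span_singleton.1 (g y).2
    obtain ⟨r, hr⟩ := pf_extr hB (s c) (g y : A) (by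
      intro a ha
      have : a • y = 0 := Subtype.ext ha
      have h2 : a • g y = 0 := by rw [← map_smul, this, map_zero]
      exact congrArg Subtype.val h2)
    have hkill : ∀ x : A, (g y : A) * x = 0 := by
      have hgd : ∀ d : X, ∀ x ∈ Submodule.comap (Submodule.mkQ _) d.1, (g y : A) * x = 0 := by
        intro d x hx
        by_cases hd : d = cc
        · rw [← hr, mul_assoc]
          refine hskill c d (fun h => hne (h.symm.trans hd)) _ ?_
          exact Submodule.smul_mem _ r hx
        · rw [← hb, smul_eq_mul, mul_assoc, hskill cc d hd x hx, mul_zero]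
      have hcov : ∀ q : A ⧸ Ideal.jacobson (⊥ : Ideal A), ∀ x : A,
          Submodule.Quotient.mk x = q → (g y : A) * x = 0 := by
        intro q
        have hq : q ∈ ⨆ d : X, d.1 := by
          rw [← sSup_eq_iSup', sSup_isotypicComponents]; trivial
        induction hq using Submodule.iSup_induction' with
        | mem d q hq => rintro x rfl; exact hgd d x hq
        | zero =>
          intro x hx
          rw [Submodule.Quotient.mk_eq_zero] at hx
          rw [← hb, smul_eq_mul, mul_assoc, (hs cc).mul_jac hB hx, mul_zero]
        | add q₁ q₂ _ _ h1 h2 =>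
          intro x hx
          obtain ⟨b₁, rfl⟩ := Submodule.Quotient.mk_surjective _ q₁
          have := h2 (x - b₁) (by rw [Submodule.Quotient.mk_sub, hx]; abel)
          rw [mul_sub, h1 b₁ rfl, sub_zero] at this
          exact this
      exact fun x => hcov _ x rfl
    exact hg0 (by simpa using hkill 1)
  have hsur := Finite.surjective_of_injective hτ
  have hmS : IsSimpleModule A (A ⧸ m) := isSimpleModule_iff_isCoatom.2 hm.out
  obtain ⟨S, ⟨f⟩⟩ := pf_embed hsp (A ⧸ m)
  have hSs : IsSimpleModule A S := IsSimpleModule.congr f.symm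
  obtain ⟨c, hc⟩ := hsur ⟨isotypicComponent A _ S, S, hSs, rfl⟩
  obtain ⟨g⟩ := hiso c S hSs (by rw [hc]; exact Submodule.le_isotypicComponent _)
  let k := f.trans g
  refine ⟨(k (Submodule.Quotient.mk 1) : A), fun h => ?_, fun a ha => ?_⟩
  · have : k (Submodule.Quotient.mk 1) = 0 := Subtype.ext h
    rw [LinearEquiv.map_eq_zero_iff, Submodule.Quotient.mk_eq_zero] at this
    exact hm.ne_top ((Ideal.eq_top_iff_one m).2 this)
  · have : a • k (Submodule.Quotient.mk 1) = 0 := by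
      rw [← map_smul, LinearEquiv.map_eq_zero_iff, ← Submodule.Quotient.mk_smul,
        Submodule.Quotient.mk_eq_zero]
      simpa using ha
    exact congrArg Subtype.val this

/-- A left self-injective semiprimary ring `A` is a left PF-ring: the left module `A` is
injective and it is a cogenerator, i.e. every left `A`-module embeds into a direct
product of copies of `A`. -/
theorem selfinjective_semiprimary_is_left_PF
    (A : Type u) [Ring A] (hsp : IsSemiprimary A) (hinj : Module.Injective A A) :
    Module.Injective A A ∧
    ∀ (M : Type v) [AddCommGroup M] [Module A M],
      ∃ (ι : Type v) (f : M →ₗ[A] (ι → A)), Function.Injective f := by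
  refine ⟨hinj, fun M _ _ => ?_⟩
  have hB := Module.Baer.of_injective hinj
  have key : ∀ m : {m : M // m ≠ 0}, ∃ f : M →ₗ[A] A, f m.1 ≠ 0 := by
    rintro ⟨m, hm⟩
    obtain ⟨P, hP, hle⟩ := Ideal.exists_le_maximal
      (LinearMap.ker (LinearMap.toSpanSingleton A M m)) (by
        rw [Ne, Ideal.eq_top_iff_one]
        simpa using hm)
    obtain ⟨x, hx, hPx⟩ := pf_kasch hsp hB P hP
    obtain ⟨f, hf⟩ := pf_ext hB m x (fun a ha => hPx a (hle (by simpa using ha)))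
    exact ⟨f, by rw [hf]; exact hx⟩
  choose f hf using key
  refine ⟨{m : M // m ≠ 0}, LinearMap.pi f, ?_⟩
  rw [← LinearMap.ker_eq_bot, LinearMap.ker_eq_bot']
  intro m hm
  by_contra h
  exact hf ⟨m, h⟩ (congrFun hm ⟨m, h⟩)
end

section
/- Let A be a left self-injective semiprimary ring with Jacobson radical J, and let Σ be the left socle of A. Then the right annihilator of Σ equals J, i.e. {a ∈ A : Σ·a = 0} = J, and A/J ≅ Hom_A(Σ, A) as right A-modules. -/
universe u

open Cardinal

/-- The socle of a module: the sum of all its simple submodules. -/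
def socle (R M : Type*) [Ring R] [AddCommGroup M] [Module R M] : Submodule R M :=
  sSup {N : Submodule R M | IsSimpleModule R N}

lemma map_mem_socle {R M N : Type*} [Ring R] [AddCommGroup M] [Module R M]
    [AddCommGroup N] [Module R N] (f : M →ₗ[R] N) {x : M} (hx : x ∈ socle R M) :
    f x ∈ socle R N := by
  have h : socle R M ≤ (socle R N).comap f := by
    refine sSup_le fun S hS => ?_
    have hS' : IsSimpleModule R S := hS
    intro y hy
    rcases LinearMap.injective_or_eq_zero (f ∘ₗ S.subtype) with h | h
    · have e := LinearEquiv.ofInjective (f ∘ₗ S.subtype) h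
      have hs : IsSimpleModule R (LinearMap.range (f ∘ₗ S.subtype)) := IsSimpleModule.congr e.symm
      have hle : LinearMap.range (f ∘ₗ S.subtype) ≤ socle R N := le_sSup hs
      exact hle ⟨⟨y, hy⟩, rfl⟩
    · have := LinearMap.congr_fun h ⟨y, hy⟩
      simp only [LinearMap.comp_apply, Submodule.subtype_apply, LinearMap.zero_apply] at this
      simp [this]
  exact h hx

/-- Right multiplication as a left-linear map. -/
def rmul {A : Type*} [Ring A] (a : A) : A →ₗ[A] A := LinearMap.toSpanSingleton A A a

lemma rmul_apply {A : Type*} [Ring A] (a x : A) : rmul a x = x * a := rfl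

lemma mem_socle_of_jacobson_mul {A : Type*} [Ring A]
    (hs : IsSemisimpleRing (RingCon.Quotient (⊥ : TwoSidedIdeal A).jacobson.ringCon))
    (z : A) (hz : ∀ j ∈ Ideal.jacobson (⊥ : Ideal A), j * z = 0) : z ∈ socle A A := by
  let c := (⊥ : TwoSidedIdeal A).jacobson.ringCon
  let π : A →+* c.Quotient := c.mk'
  have hπ : Function.Surjective π := c.mk'_surjective
  letI : Module A c.Quotient := Module.compHom _ π
  haveI : RingHomSurjective π := ⟨hπ⟩
  let e : c.Quotient →ₛₗ[π] c.Quotient :=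
    { AddMonoidHom.id c.Quotient with map_smul' := fun _ _ => rfl }
  have hss : IsSemisimpleModule A c.Quotient :=
    (e.isSemisimpleModule_iff_of_bijective Function.bijective_id).2 hs
  let p : A →ₗ[A] c.Quotient :=
    { toFun := π, map_add' := map_add π, map_smul' := fun a b => map_mul π a b }
  have hq : IsSemisimpleModule A (A ⧸ LinearMap.ker p) :=
    IsSemisimpleModule.congr (p.quotKerEquivOfSurjective hπ)
  have hker : LinearMap.ker p ≤ LinearMap.ker (rmul z) := by
    intro x hx
    rw [LinearMap.mem_ker, rmul_apply]
    apply hz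
    have hx' : c.mk' x = c.mk' 0 := by
      rw [map_zero]; exact hx
    have hx2 : x ∈ (⊥ : TwoSidedIdeal A).jacobson := by
      rw [TwoSidedIdeal.mem_iff]
      exact (RingCon.eq c).1 hx'
    rw [TwoSidedIdeal.mem_jacobson_iff] at hx2
    rw [Ideal.mem_jacobson_iff]
    simpa using hx2
  have h1 : (Submodule.Quotient.mk 1 : A ⧸ LinearMap.ker p) ∈ socle A (A ⧸ LinearMap.ker p) := by
    unfold socle
    rw [IsSemisimpleModule.sSup_simples_eq_top]
    trivial
  have h2 := map_mem_socle ((LinearMap.ker p).liftQ (rmul z) hker) h1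
  simpa [rmul_apply] using h2

lemma exists_mul_mem_socle {A : Type*} [Ring A] (hsp : IsSemiprimary A) (y : A) (hy : y ≠ 0) :
    ∃ r : A, r * y ≠ 0 ∧ r * y ∈ socle A A := by
  obtain ⟨hs, n, -, hn⟩ := hsp
  by_contra! hcon
  have key : ∀ k : ℕ, ∃ f : Fin k → A, (∀ i, f i ∈ Ideal.jacobson (⊥ : Ideal A)) ∧
      (List.ofFn f).prod * y ≠ 0 := by
    intro k
    induction k with
    | zero => exact ⟨Fin.elim0, fun i => i.elim0, by simpa using hy⟩
    | succ k ih =>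
      obtain ⟨f, hf, hne⟩ := ih
      have h := mt (mem_socle_of_jacobson_mul hs _) (hcon _ hne)
      push Not at h
      obtain ⟨j, hj, hj0⟩ := h
      refine ⟨Fin.cons j f, fun i => ?_, ?_⟩
      · refine Fin.cases ?_ (fun i => ?_) i
        · simpa using hj
        · simpa using hf i
      · simpa [List.ofFn_succ, mul_assoc] using hj0
  obtain ⟨f, hf, hne⟩ := key n
  exact hne (by rw [hn f hf, zero_mul])

lemma exists_right_inv {A : Type u} [Ring A] (hsp : IsSemiprimary A)
    (hinj : Module.Injective A A) (b : A) (hb : ∀ s ∈ socle A A, s * b = 0) :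
    ∃ c, (1 + b) * c = 1 := by
  have hi : Function.Injective (rmul (1 + b)) := by
    rw [injective_iff_map_eq_zero]
    intro y hy
    rw [rmul_apply] at hy
    by_contra hy0
    obtain ⟨r, hr, hrs⟩ := exists_mul_mem_socle hsp y hy0
    have h1 := hb _ hrs
    apply hr
    calc r * y = r * (y * (1 + b)) - r * y * b := by noncomm_ring
      _ = 0 := by rw [hy, h1]; simp
  obtain ⟨h, hh⟩ := hinj.out (rmul (1 + b)) hi LinearMap.id
  refine ⟨h 1, ?_⟩
  have := hh 1
  rw [rmul_apply, one_mul] at this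
  rw [← smul_eq_mul, ← map_smul, smul_eq_mul, mul_one, this]
  rfl

lemma exists_left_inv {A : Type u} [Ring A] (hsp : IsSemiprimary A)
    (hinj : Module.Injective A A) (b : A) (hb : ∀ s ∈ socle A A, s * b = 0) :
    ∃ c, c * (1 + b) = 1 := by
  obtain ⟨c, hc⟩ := exists_right_inv hsp hinj b hb
  have hc' : c = 1 + -(b * c) := by
    rw [← hc]; noncomm_ring
  obtain ⟨d, hd⟩ := exists_right_inv hsp hinj (-(b * c)) (fun s hs => by
    rw [mul_neg, ← mul_assoc, hb s hs]; simp)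
  rw [← hc'] at hd
  have : d = 1 + b := by
    calc d = ((1 + b) * c) * d := by rw [hc, one_mul]
      _ = 1 + b := by rw [mul_assoc, hd, mul_one]
  exact ⟨c, this ▸ hd⟩

lemma socle_mul_jacobson {A : Type u} [Ring A] (hsp : IsSemiprimary A)
    (hinj : Module.Injective A A) (a : A) (ha : a ∈ Ideal.jacobson (⊥ : Ideal A)) :
    ∀ s ∈ socle A A, s * a = 0 := by
  have h : socle A A ≤ LinearMap.ker (rmul a) := by
    refine sSup_le fun S hS => ?_
    have hS' : IsSimpleModule A S := hS
    intro y hy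
    rcases LinearMap.injective_or_eq_zero (rmul a ∘ₗ S.subtype) with h | h
    · obtain ⟨g, hg⟩ := hinj.out _ h S.subtype
      have h1 : y * (a * g 1) = y := by
        have h2 : g (y * a) = y := hg ⟨y, hy⟩
        rw [← mul_assoc]
        nth_rewrite 2 [← h2]
        rw [← smul_eq_mul (y * a), ← map_smul, smul_eq_mul, mul_one]
      have h3 : ∀ k : ℕ, y * (a * g 1) ^ k = y := by
        intro k
        induction k with
        | zero => simp
        | succ k ih => rw [pow_succ, ← mul_assoc, ih, h1]
      obtain ⟨-, n, -, hn⟩ := hsp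
      have h4 := hn (fun _ => a * g 1) (fun _ => Ideal.mul_mem_right _ _ ha)
      rw [List.ofFn_const, List.prod_replicate] at h4
      have h5 := h3 n
      rw [h4, mul_zero] at h5
      simp [← h5]
    · exact LinearMap.congr_fun h ⟨y, hy⟩
  exact fun s hs => h hs

/-- For a left self-injective semiprimary ring `A` with Jacobson radical `J` and left socle
`Σ`, the right annihilator of `Σ` is exactly `J`, and `A / J ≅ Hom_A(Σ, A)` as right
`A`-modules (expressed by a right `A`-linear surjection `A → Hom_A(Σ, A)` whose kernel is
exactly `J`, i.e. an exact sequence `0 → J → A → Hom_A(Σ, A) → 0`). -/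
theorem right_annihilator_socle_eq_jacobson
    (A : Type u) [Ring A] (hsp : IsSemiprimary A) (hinj : Module.Injective A A) :
    (∀ a : A, (∀ s ∈ socle A A, s * a = 0) ↔ a ∈ Ideal.jacobson (⊥ : Ideal A)) ∧
    ∃ φ : A →ₗ[Aᵐᵒᵖ] ((socle A A) →ₗ[A] A), Function.Surjective φ ∧
      ∀ a : A, φ a = 0 ↔ a ∈ Ideal.jacobson (⊥ : Ideal A) := by
  have main : ∀ a : A, (∀ s ∈ socle A A, s * a = 0) ↔ a ∈ Ideal.jacobson (⊥ : Ideal A) := by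
    intro a
    refine ⟨fun h => ?_, socle_mul_jacobson hsp hinj a⟩
    rw [Ideal.mem_jacobson_iff]
    intro y
    obtain ⟨c, hc⟩ := exists_left_inv hsp hinj (y * a) (fun s hs => by
      rw [← mul_assoc]
      exact h _ (map_mem_socle (rmul y) hs))
    refine ⟨c, ?_⟩
    rw [Submodule.mem_bot, ← hc]
    noncomm_ring
  refine ⟨main, ?_⟩
  let φ : A →ₗ[Aᵐᵒᵖ] ((socle A A) →ₗ[A] A) :=
    { toFun := fun a => rmul a ∘ₗ (socle A A).subtype
      map_add' := fun a b => by
        ext s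
        simp [rmul_apply, mul_add]
      map_smul' := fun r a => by
        ext s
        simp [rmul_apply, mul_assoc] }
  have hφ : ∀ a s, φ a s = (s : A) * a := fun _ _ => rfl
  refine ⟨φ, ?_, ?_⟩
  · intro f
    obtain ⟨g, hg⟩ := hinj.out (socle A A).subtype (Submodule.subtype_injective _) f
    refine ⟨g 1, ?_⟩
    ext s
    rw [hφ, ← hg s, ← smul_eq_mul, ← map_smul, smul_eq_mul, mul_one]
    rfl
  · intro a
    rw [← main a]
    constructor
    · intro h s hs
      exact LinearMap.congr_fun h ⟨s, hs⟩
    · intro h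
      ext s
      exact h s s.2
end

section
/- Let A be a left self-injective semiprimary algebra over a field K, and let 0 = Σ₋₁ ⊂ Σ₀ ⊂ Σ₁ ⊂ ⋯ ⊂ Σ_{n-1} = A be its left Loewy series. Then dim_K(A) = Σ_k dim_K((Σ_k/Σ_{k-1})*), where for a left A-module M, M* = Hom_A(M, A). -/
universe u v

open Cardinal

/-- The (left) Loewy series of `A`: `loewySeries A 0 = 0` and `loewySeries A (k+1)` is the
preimage in `A` of the socle of `A ⧸ loewySeries A k`, so the successive quotients are the
socles of the corresponding quotients of `A`.  (Here `Σₖ = loewySeries A (k+1)`, and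
`Σₖ/Σₖ₋₁ ≅ socle (A ⧸ loewySeries A k)`.) -/
def loewySeries (A : Type u) [Ring A] : ℕ → Submodule A A
  | 0 => ⊥
  | k + 1 => (socle A (A ⧸ loewySeries A k)).comap (loewySeries A k).mkQ

/-- Precomposition with an `A`-linear map, as a `K`-linear map on duals. -/
def dualPrecomp (K : Type v) [Field K] (A : Type u) [Ring A] [Algebra K A]
    {M N : Type u} [AddCommGroup M] [Module A M] [AddCommGroup N] [Module A N]
    (f : M →ₗ[A] N) : (N →ₗ[A] A) →ₗ[K] (M →ₗ[A] A) where
  toFun φ := φ.comp f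
  map_add' _ _ := rfl
  map_smul' _ _ := rfl

/-- Additivity of the dimension of the dual along a short exact sequence. -/
theorem rank_dual_add (K : Type v) [Field K] (A : Type u) [Ring A] [Algebra K A]
    (hinj : Module.Injective A A) {M P : Type u} [AddCommGroup M] [Module A M]
    [AddCommGroup P] [Module A P] (S : Submodule A M) (q : M →ₗ[A] P)
    (hq : Function.Surjective q) (hS : LinearMap.ker q = S) :
    Module.rank K (M →ₗ[A] A) = Module.rank K (S →ₗ[A] A) + Module.rank K (P →ₗ[A] A) := by
  have hsurj : Function.Surjective (dualPrecomp K A S.subtype) := by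
    intro φ
    obtain ⟨g, hg⟩ := hinj.out S.subtype S.injective_subtype φ
    exact ⟨g, LinearMap.ext hg⟩
  have hinjq : Function.Injective (dualPrecomp K A q) := by
    intro φ ψ h
    ext x
    obtain ⟨y, rfl⟩ := hq x
    exact LinearMap.congr_fun h y
  have hker : LinearMap.ker (dualPrecomp K A S.subtype) = LinearMap.range (dualPrecomp K A q) := by
    ext φ
    constructor
    · intro h
      have h0 : LinearMap.ker q ≤ LinearMap.ker φ := by
        intro x hx
        rw [hS] at hx
        exact LinearMap.congr_fun (LinearMap.mem_ker.1 h) ⟨x, hx⟩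
      refine ⟨((LinearMap.ker q).liftQ φ h0).comp (q.quotKerEquivOfSurjective hq).symm.toLinearMap, ?_⟩
      apply LinearMap.ext
      intro x
      have : (q.quotKerEquivOfSurjective hq).symm (q x) = (LinearMap.ker q).mkQ x := by
        rw [LinearEquiv.symm_apply_eq]; rfl
      change (LinearMap.ker q).liftQ φ h0 ((q.quotKerEquivOfSurjective hq).symm (q x)) = φ x
      rw [this]; rfl
    · rintro ⟨ψ, rfl⟩
      apply LinearMap.mem_ker.2
      apply LinearMap.ext
      rintro ⟨x, hx⟩
      rw [← hS] at hx
      change ψ (q x) = 0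
      rw [LinearMap.mem_ker.1 hx, map_zero]
  rw [LinearMap.rank_eq_of_surjective hsurj, hker,
    (LinearEquiv.ofInjective (dualPrecomp K A q) hinjq).rank_eq]

theorem rank_eq_partial (K : Type v) [Field K] (A : Type u) [Ring A] [Algebra K A]
    (hinj : Module.Injective A A) (m : ℕ) :
    Module.rank K A =
      ∑ k ∈ Finset.range m, Module.rank K ((socle A (A ⧸ loewySeries A k)) →ₗ[A] A)
        + Module.rank K ((A ⧸ loewySeries A m) →ₗ[A] A) := by
  induction m with
  | zero =>
    have e : Module.rank K (A →ₗ[A] A) = Module.rank K A := by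
      refine LinearEquiv.rank_eq (LinearEquiv.ofBijective
        ({ toFun := fun φ => φ 1, map_add' := fun _ _ => rfl, map_smul' := fun _ _ => rfl } :
          (A →ₗ[A] A) →ₗ[K] A) ⟨fun φ ψ h => LinearMap.ext_ring h, fun a => ?_⟩)
      exact ⟨LinearMap.toSpanSingleton A A a, one_smul A a⟩
    rw [Finset.range_zero, Finset.sum_empty, zero_add, ← e]
    have := rank_dual_add K A hinj (⊥ : Submodule A A) ((⊥ : Submodule A A).mkQ)
      (Submodule.mkQ_surjective _) (Submodule.ker_mkQ _)
    rw [this, rank_subsingleton', zero_add]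
    rfl
  | succ m ih =>
    rw [ih, Finset.sum_range_succ, add_assoc]
    congr 1
    have hle : loewySeries A m ≤ loewySeries A (m + 1) := by
      intro x hx
      change (loewySeries A m).mkQ x ∈ socle A (A ⧸ loewySeries A m)
      rw [Submodule.mkQ_apply, (Submodule.Quotient.mk_eq_zero _).2 hx]
      exact zero_mem _
    refine rank_dual_add K A hinj _ (Submodule.factor hle) (Submodule.factor_surjective hle) ?_
    ext x
    obtain ⟨y, rfl⟩ := Submodule.mkQ_surjective _ x
    rw [LinearMap.mem_ker, Submodule.factor_mk]
    exact Submodule.Quotient.mk_eq_zero _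

/-- Let `A` be a left self-injective semiprimary algebra over a field `K`, with left Loewy
series `0 = Σ₋₁ ⊂ Σ₀ ⊂ ⋯ ⊂ Σ_{n-1} = A` (so `Σₖ/Σₖ₋₁` is the socle of `A/Σₖ₋₁`, and
`loewySeries A n = ⊤`).  Then `dim_K A = ∑ₖ dim_K ((Σₖ/Σₖ₋₁)*)`, where `M* = Hom_A(M, A)`. -/
theorem rank_eq_sum_rank_dual_loewy_factors
    (K : Type v) [Field K] (A : Type u) [Ring A] [Algebra K A]
    (hsp : IsSemiprimary A) (hinj : Module.Injective A A)
    (n : ℕ) (hn : loewySeries A n = ⊤) :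
    Module.rank K A =
      ∑ k ∈ Finset.range n,
        Module.rank K ((socle A (A ⧸ loewySeries A k)) →ₗ[A] A) := by
  have h := rank_eq_partial K A hinj n
  have : Subsingleton (A ⧸ loewySeries A n) := Submodule.Quotient.subsingleton_iff.2 hn
  rw [rank_subsingleton' K ((A ⧸ loewySeries A n) →ₗ[A] A), add_zero] at h
  exact h
end

section
/- Let A be a left self-injective semiprimary ring, e an idempotent of A with Ae indecomposable as a left A-module, and M a left A-module with simple essential socle that embeds in Ae. Then the right A-module M* = Hom_A(M, A) is a quotient of eA = Hom_A(Ae, A); in particular M* is a local right A-module. -/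
universe u v

open Cardinal

/-- A module is *indecomposable* if it is nonzero and is not the direct sum of two
nonzero submodules. -/
def IsIndecomposableModule (R M : Type*) [Ring R] [AddCommGroup M] [Module R M] : Prop :=
  Nontrivial M ∧ ∀ N N' : Submodule R M, IsCompl N N' → N = ⊥ ∨ N' = ⊥

/-- A submodule is *essential* if it intersects every nonzero submodule nontrivially. -/
def IsEssentialSubmodule {R M : Type*} [Ring R] [AddCommGroup M] [Module R M]
    (N : Submodule R M) : Prop :=
  ∀ P : Submodule R M, N ⊓ P = ⊥ → P = ⊥

/-- Extension of maps along an injection into a module in the universe of `A`. -/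
theorem extend_of_injective {A : Type u} [Ring A] (hinj : Module.Injective A A)
    {M : Type v} [AddCommGroup M] [Module A M] {X : Type u} [AddCommGroup X] [Module A X]
    (h : M →ₗ[A] X) (hh : Function.Injective h) (k : M →ₗ[A] A) :
    ∃ l : X →ₗ[A] A, ∀ m, l (h m) = k m := by
  obtain ⟨l, hl⟩ := hinj.out (LinearMap.range h).subtype
    (Submodule.injective_subtype _) (k ∘ₗ (LinearEquiv.ofInjective h hh).symm.toLinearMap)
  refine ⟨l, fun m => ?_⟩
  have h1 := hl (LinearEquiv.ofInjective h hh m)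
  simpa using h1

/-- Let `A` be a left self-injective semiprimary ring, `e` an idempotent with `Ae`
indecomposable as a left module, and `M` a left `A`-module with simple essential socle
which embeds in `Ae`.  Then the right `A`-module `M* = Hom_A(M, A)` is a quotient of
`eA = Hom_A(Ae, A)`; in particular `M*` is a local right `A`-module. -/
theorem dual_quotient_of_eA_and_local
    (A : Type u) [Ring A] (hsp : IsSemiprimary A) (hinj : Module.Injective A A)
    (e : A) (he : IsIdempotentElem e)
    (hind : IsIndecomposableModule A (Submodule.span A {e}))
    (M : Type v) [AddCommGroup M] [Module A M]
    (hsoc : IsSimpleModule A (socle A M)) (hess : IsEssentialSubmodule (socle A M))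
    (f : M →ₗ[A] (Submodule.span A ({e} : Set A))) (hf : Function.Injective f) :
    (∃ g : ((Submodule.span A ({e} : Set A)) →ₗ[A] A) →ₗ[Aᵐᵒᵖ] (M →ₗ[A] A),
      Function.Surjective g) ∧
    ∃ N : Submodule Aᵐᵒᵖ (M →ₗ[A] A), N ≠ ⊤ ∧ ∀ P : Submodule Aᵐᵒᵖ (M →ₗ[A] A),
      P ≠ ⊤ → P ≤ N := by
  have hM : ∃ m ∈ socle A M, m ≠ 0 := by
    have := hsoc.nontrivial
    obtain ⟨x, hx⟩ := exists_ne (0 : socle A M)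
    exact ⟨x, x.2, fun h => hx (Subtype.ext h)⟩
  refine ⟨⟨⟨⟨fun l => l ∘ₗ f, fun _ _ => rfl⟩, fun _ _ => rfl⟩, fun k => ?_⟩, ?_⟩
  · obtain ⟨l, hl⟩ := extend_of_injective hinj f hf k
    exact ⟨l, LinearMap.ext hl⟩
  · refine ⟨{ carrier := {h | ∀ m ∈ socle A M, h m = 0}
              add_mem' := fun {a b} ha hb m hm => by simp [ha m hm, hb m hm]
              zero_mem' := fun m _ => rfl
              smul_mem' := fun c h hh m hm => by simp [hh m hm] }, ?_, ?_⟩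
    · intro htop
      obtain ⟨m, hm, hm0⟩ := hM
      have h1 : (Submodule.subtype _ ∘ₗ f : M →ₗ[A] A) ∈
        (⊤ : Submodule Aᵐᵒᵖ (M →ₗ[A] A)) := trivial
      rw [← htop] at h1
      have h2 : ((f m : Submodule.span A ({e} : Set A)) : A) = 0 := h1 m hm
      apply hm0
      apply hf
      rw [map_zero]
      exact Subtype.ext h2
    · intro P hP h hhP
      by_contra hcon
      apply hP
      have hker : LinearMap.ker h = ⊥ := by
        apply hess
        have hat : IsAtom (socle A M) := isSimpleModule_iff_isAtom.mp hsoc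
        rcases hat.le_iff.mp (inf_le_left : socle A M ⊓ LinearMap.ker h ≤ socle A M) with h0 | h0
        · exact h0
        · exact absurd (fun m hm => (inf_eq_left.mp h0) hm) hcon
      rw [eq_top_iff]
      intro k _
      obtain ⟨l, hl⟩ := extend_of_injective hinj h (LinearMap.ker_eq_bot.mp hker) k
      have : k = MulOpposite.op (l 1) • h := by
        ext m
        rw [← hl m]
        have : h m = h m • (1 : A) := by simp
        rw [this, map_smul]
        simp
      rw [this]
      exact P.smul_mem _ hhP
end
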